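/- There is a family of first-order sequents {S_i}_{i<ω} such that: (1) the size of S_i is polynomial in i; (2) there is no elementary function of i bounding the size of the smallest cut-free LK-proofs of S_i; (3) S_i has LK-proofs with cuts of size polynomially bounded in i; (4) S_i contains weak quantifiers only; and (5) for every cut-formula A occurring in the polynomial-size proof of S_i, the formula ∀x̄ (A^M → A^M) occurs on the left-hand side of the end-sequent S_i, where A^M is the matrix of A. -/

import Mathlib

namespace EpsCalc

/-! ## Syntax: terms and formulas of first-order logic extended by epsilon terms.
We use a locally nameless representation: `bvar` are de Bruijn indices for bound
variables (bound by `all`, `ex`, or `eps`), `fvar` are named free variables. -/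

mutual
inductive Tm : Type where
  | bvar : ℕ → Tm
  | fvar : ℕ → Tm
  | func : ℕ → Tms → Tm
  | eps  : Fm → Tm          -- the epsilon term ε_x A(x)

inductive Tms : Type where
  | nil  : Tms
  | cons : Tm → Tms → Tms

inductive Fm : Type where
  | atom : ℕ → Tms → Fm
  | and  : Fm → Fm → Fm
  | or   : Fm → Fm → Fm
  | imp  : Fm → Fm → Fm
  | not  : Fm → Fm
  | all  : Fm → Fm          -- ∀ binding de Bruijn index 0
  | ex   : Fm → Fm          -- ∃ binding de Bruijn index 0
end

/-! lifting of bound variables (shift indices ≥ k by one) -/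
mutual
def liftT (k : ℕ) : Tm → Tm
  | .bvar n => if n < k then .bvar n else .bvar (n+1)
  | .fvar a => .fvar a
  | .func f ts => .func f (liftTs k ts)
  | .eps A => .eps (liftF (k+1) A)
def liftTs (k : ℕ) : Tms → Tms
  | .nil => .nil
  | .cons t ts => .cons (liftT k t) (liftTs k ts)
def liftF (k : ℕ) : Fm → Fm
  | .atom p ts => .atom p (liftTs k ts)
  | .and A B => .and (liftF k A) (liftF k B)
  | .or A B => .or (liftF k A) (liftF k B)
  | .imp A B => .imp (liftF k A) (liftF k B)
  | .not A => .not (liftF k A)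
  | .all A => .all (liftF (k+1) A)
  | .ex A => .ex (liftF (k+1) A)
end

/-! substitution of a term for the bound variable k -/
mutual
def subT (k : ℕ) (u : Tm) : Tm → Tm
  | .bvar n => if n = k then u else if n < k then .bvar n else .bvar (n-1)
  | .fvar a => .fvar a
  | .func f ts => .func f (subTs k u ts)
  | .eps A => .eps (subF (k+1) (liftT 0 u) A)
def subTs (k : ℕ) (u : Tm) : Tms → Tms
  | .nil => .nil
  | .cons t ts => .cons (subT k u t) (subTs k u ts)
def subF (k : ℕ) (u : Tm) : Fm → Fm
  | .atom p ts => .atom p (subTs k u ts)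
  | .and A B => .and (subF k u A) (subF k u B)
  | .or A B => .or (subF k u A) (subF k u B)
  | .imp A B => .imp (subF k u A) (subF k u B)
  | .not A => .not (subF k u A)
  | .all A => .all (subF (k+1) (liftT 0 u) A)
  | .ex A => .ex (subF (k+1) (liftT 0 u) A)
end

/-- instantiate the outermost bound variable of `A` with the term `t`:  A(t) -/
def inst0 (A : Fm) (t : Tm) : Fm := subF 0 t A

/-! substitution of a term for a *free* variable -/
mutual
def sfvT (a : ℕ) (u : Tm) : Tm → Tm
  | .bvar n => .bvar n
  | .fvar b => if b = a then u else .fvar b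
  | .func f ts => .func f (sfvTs a u ts)
  | .eps A => .eps (sfvF a (liftT 0 u) A)
def sfvTs (a : ℕ) (u : Tm) : Tms → Tms
  | .nil => .nil
  | .cons t ts => .cons (sfvT a u t) (sfvTs a u ts)
def sfvF (a : ℕ) (u : Tm) : Fm → Fm
  | .atom p ts => .atom p (sfvTs a u ts)
  | .and A B => .and (sfvF a u A) (sfvF a u B)
  | .or A B => .or (sfvF a u A) (sfvF a u B)
  | .imp A B => .imp (sfvF a u A) (sfvF a u B)
  | .not A => .not (sfvF a u A)
  | .all A => .all (sfvF a (liftT 0 u) A)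
  | .ex A => .ex (sfvF a (liftT 0 u) A)
end

/-! abstraction of a free variable into a bound variable (for universal closure) -/
mutual
def abT (a k : ℕ) : Tm → Tm
  | .bvar n => .bvar n
  | .fvar b => if b = a then .bvar k else .fvar b
  | .func f ts => .func f (abTs a k ts)
  | .eps A => .eps (abF a (k+1) A)
def abTs (a k : ℕ) : Tms → Tms
  | .nil => .nil
  | .cons t ts => .cons (abT a k t) (abTs a k ts)
def abF (a k : ℕ) : Fm → Fm
  | .atom p ts => .atom p (abTs a k ts)
  | .and A B => .and (abF a k A) (abF a k B)
  | .or A B => .or (abF a k A) (abF a k B)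
  | .imp A B => .imp (abF a k A) (abF a k B)
  | .not A => .not (abF a k A)
  | .all A => .all (abF a (k+1) A)
  | .ex A => .ex (abF a (k+1) A)
end

/-! free variables -/
mutual
def fvT : Tm → List ℕ
  | .bvar _ => []
  | .fvar a => [a]
  | .func _ ts => fvTs ts
  | .eps A => fvF A
def fvTs : Tms → List ℕ
  | .nil => []
  | .cons t ts => fvT t ++ fvTs ts
def fvF : Fm → List ℕ
  | .atom _ ts => fvTs ts
  | .and A B => fvF A ++ fvF B
  | .or A B => fvF A ++ fvF B
  | .imp A B => fvF A ++ fvF B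
  | .not A => fvF A
  | .all A => fvF A
  | .ex A => fvF A
end

/-! function symbols occurring in an expression -/
mutual
def fsT : Tm → List ℕ
  | .bvar _ => []
  | .fvar _ => []
  | .func f ts => f :: fsTs ts
  | .eps A => fsF A
def fsTs : Tms → List ℕ
  | .nil => []
  | .cons t ts => fsT t ++ fsTs ts
def fsF : Fm → List ℕ
  | .atom _ ts => fsTs ts
  | .and A B => fsF A ++ fsF B
  | .or A B => fsF A ++ fsF B
  | .imp A B => fsF A ++ fsF B
  | .not A => fsF A
  | .all A => fsF A
  | .ex A => fsF A
end

/-! number of symbols (size) -/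
mutual
def szT : Tm → ℕ
  | .bvar _ => 1
  | .fvar _ => 1
  | .func _ ts => 1 + szTs ts
  | .eps A => 1 + szF A
def szTs : Tms → ℕ
  | .nil => 0
  | .cons t ts => szT t + szTs ts
def szF : Fm → ℕ
  | .atom _ ts => 1 + szTs ts
  | .and A B => 1 + szF A + szF B
  | .or A B => 1 + szF A + szF B
  | .imp A B => 1 + szF A + szF B
  | .not A => 1 + szF A
  | .all A => 1 + szF A
  | .ex A => 1 + szF A
end

/-! epsilon-freeness (first-order language) and quantifier-freeness (epsilon language) -/
mutual
def noEpsT : Tm → Bool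
  | .bvar _ => true
  | .fvar _ => true
  | .func _ ts => noEpsTs ts
  | .eps _ => false
def noEpsTs : Tms → Bool
  | .nil => true
  | .cons t ts => noEpsT t && noEpsTs ts
def noEpsF : Fm → Bool
  | .atom _ ts => noEpsTs ts
  | .and A B => noEpsF A && noEpsF B
  | .or A B => noEpsF A && noEpsF B
  | .imp A B => noEpsF A && noEpsF B
  | .not A => noEpsF A
  | .all A => noEpsF A
  | .ex A => noEpsF A
end

/-- `A` is a formula of the first-order language: it contains no epsilon terms. -/
def isFO (A : Fm) : Bool := noEpsF A

/-- quantifier-freeness: `A` belongs to the language of the epsilon calculus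
(propositional language over epsilon terms) iff `qfree A`. -/
def qfree : Fm → Bool
  | .atom _ _ => true
  | .and A B => qfree A && qfree B
  | .or A B => qfree A && qfree B
  | .imp A B => qfree A && qfree B
  | .not A => qfree A
  | .all _ => false
  | .ex _ => false

/-- The epsilon translation [A]^ε of a formula. -/
def epsT : Fm → Fm
  | .atom p ts => .atom p ts
  | .and A B => .and (epsT A) (epsT B)
  | .or A B => .or (epsT A) (epsT B)
  | .imp A B => .imp (epsT A) (epsT B)
  | .not A => .not (epsT A)
  | .ex A => inst0 (epsT A) (.eps (epsT A))
  | .all A => inst0 (epsT A) (.eps (.not (epsT A)))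

/-! ## The matrix A^M of a formula: delete all quantifiers and replace the
variables bound by them by fresh free variables. -/
mutual
def mxT (b d : ℕ) : Tm → Tm
  | .bvar n => if n < d then .fvar (b + (d - 1 - n)) else .bvar (n - d)
  | .fvar a => .fvar a
  | .func f ts => .func f (mxTs b d ts)
  | .eps A => .eps A          -- (the matrix is only used on epsilon-free formulas)
def mxTs (b d : ℕ) : Tms → Tms
  | .nil => .nil
  | .cons t ts => .cons (mxT b d t) (mxTs b d ts)
def mxF (b d : ℕ) : Fm → Fm
  | .atom p ts => .atom p (mxTs b d ts)
  | .and A B => .and (mxF b d A) (mxF b d B)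
  | .or A B => .or (mxF b d A) (mxF b d B)
  | .imp A B => .imp (mxF b d A) (mxF b d B)
  | .not A => .not (mxF b d A)
  | .all A => mxF b (d+1) A
  | .ex A => mxF b (d+1) A
end

def maxFv (A : Fm) : ℕ := (fvF A).foldr max 0

/-- the matrix A^M of A -/
def matrix (A : Fm) : Fm := mxF (maxFv A + 1) 0 A

/-- universal closure ∀x̄ A over all free variables of A -/
def uclose (A : Fm) : Fm :=
  ((fvF A).dedup).foldr (fun a B => Fm.all (abF a 0 B)) A

/-! ## Weak/strong quantifier occurrences.
`posW A` : all quantifier occurrences of `A` are weak when `A` occurs in the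
succedent; `negW A` : likewise for the antecedent. -/
mutual
def posW : Fm → Bool
  | .atom _ _ => true
  | .and A B => posW A && posW B
  | .or A B => posW A && posW B
  | .imp A B => negW A && posW B
  | .not A => negW A
  | .all _ => false
  | .ex A => posW A
def negW : Fm → Bool
  | .atom _ _ => true
  | .and A B => negW A && negW B
  | .or A B => negW A && negW B
  | .imp A B => posW A && negW B
  | .not A => posW A
  | .all A => negW A
  | .ex _ => false
end

/-- the sequent Γ ⊢ Δ contains weak quantifier occurrences only -/
def WeakSeq (Γ Δ : List Fm) : Prop :=
  (∀ A ∈ Γ, negW A = true) ∧ (∀ A ∈ Δ, posW A = true)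

/-- the sequent Γ ⊢ Δ is in the first-order language -/
def FOSeq (Γ Δ : List Fm) : Prop :=
  (∀ A ∈ Γ, isFO A = true) ∧ (∀ A ∈ Δ, isFO A = true)

/-- the sequent Γ ⊢ Δ is in the language of the epsilon calculus -/
def EpsSeq (Γ Δ : List Fm) : Prop :=
  (∀ A ∈ Γ, qfree A = true) ∧ (∀ A ∈ Δ, qfree A = true)

def fvSeq (Γ Δ : List Fm) : List ℕ :=
  (Γ ++ Δ).foldr (fun A l => fvF A ++ l) []

def fsSeq (Γ Δ : List Fm) : List ℕ :=
  (Γ ++ Δ).foldr (fun A l => fsF A ++ l) []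

def seqSize (Γ Δ : List Fm) : ℕ :=
  (Γ ++ Δ).foldr (fun A n => szF A + n) 0


/-! ## LK derivation trees.
`Deriv Γ Δ` are derivation trees of the sequent Γ ⊢ Δ built from the rules of
Gentzen's LK, where the strong quantifier rules `allR`/`exL` carry an
eigenvariable but *no* correctness condition; the various eigenvariable
disciplines (LK, LK⁺, LK⁺⁺) are imposed as predicates on the trees below. -/
inductive Deriv : List Fm → List Fm → Type where
  | ax (A : Fm) : Deriv [A] [A]
  | andL (A B : Fm) (Γ Δ : List Fm) :
      Deriv (A :: B :: Γ) Δ → Deriv (Fm.and A B :: Γ) Δ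
  | andR (A B : Fm) (Γ₁ Δ₁ Γ₂ Δ₂ : List Fm) :
      Deriv Γ₁ (A :: Δ₁) → Deriv Γ₂ (B :: Δ₂) →
      Deriv (Γ₁ ++ Γ₂) (Fm.and A B :: (Δ₁ ++ Δ₂))
  | orL (A B : Fm) (Γ₁ Δ₁ Γ₂ Δ₂ : List Fm) :
      Deriv (A :: Γ₁) Δ₁ → Deriv (B :: Γ₂) Δ₂ →
      Deriv (Fm.or A B :: (Γ₁ ++ Γ₂)) (Δ₁ ++ Δ₂)
  | orR (A B : Fm) (Γ Δ : List Fm) :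
      Deriv Γ (A :: B :: Δ) → Deriv Γ (Fm.or A B :: Δ)
  | impL (A B : Fm) (Γ₁ Δ₁ Γ₂ Δ₂ : List Fm) :
      Deriv Γ₁ (A :: Δ₁) → Deriv (B :: Γ₂) Δ₂ →
      Deriv (Fm.imp A B :: (Γ₁ ++ Γ₂)) (Δ₁ ++ Δ₂)
  | impR (A B : Fm) (Γ Δ : List Fm) :
      Deriv (A :: Γ) (B :: Δ) → Deriv Γ (Fm.imp A B :: Δ)
  | notL (A : Fm) (Γ Δ : List Fm) :
      Deriv Γ (A :: Δ) → Deriv (Fm.not A :: Γ) Δ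
  | notR (A : Fm) (Γ Δ : List Fm) :
      Deriv (A :: Γ) Δ → Deriv Γ (Fm.not A :: Δ)
  | wL (A : Fm) (Γ Δ : List Fm) : Deriv Γ Δ → Deriv (A :: Γ) Δ
  | wR (A : Fm) (Γ Δ : List Fm) : Deriv Γ Δ → Deriv Γ (A :: Δ)
  | cL (A : Fm) (Γ Δ : List Fm) : Deriv (A :: A :: Γ) Δ → Deriv (A :: Γ) Δ
  | cR (A : Fm) (Γ Δ : List Fm) : Deriv Γ (A :: A :: Δ) → Deriv Γ (A :: Δ)
  | cut (A : Fm) (Γ₁ Δ₁ Γ₂ Δ₂ : List Fm) :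
      Deriv Γ₁ (A :: Δ₁) → Deriv (A :: Γ₂) Δ₂ →
      Deriv (Γ₁ ++ Γ₂) (Δ₁ ++ Δ₂)
  | allL (t : Tm) (A : Fm) (Γ Δ : List Fm) :
      Deriv (inst0 A t :: Γ) Δ → Deriv (Fm.all A :: Γ) Δ
  | allR (a : ℕ) (A : Fm) (Γ Δ : List Fm) :
      Deriv Γ (inst0 A (Tm.fvar a) :: Δ) → Deriv Γ (Fm.all A :: Δ)
  | exL (a : ℕ) (A : Fm) (Γ Δ : List Fm) :
      Deriv (inst0 A (Tm.fvar a) :: Γ) Δ → Deriv (Fm.ex A :: Γ) Δ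
  | exR (t : Tm) (A : Fm) (Γ Δ : List Fm) :
      Deriv Γ (inst0 A t :: Δ) → Deriv Γ (Fm.ex A :: Δ)
  | permL (Γ Γ' Δ : List Fm) : Γ.Perm Γ' → Deriv Γ Δ → Deriv Γ' Δ
  | permR (Γ Δ Δ' : List Fm) : Δ.Perm Δ' → Deriv Γ Δ → Deriv Γ Δ'

namespace Deriv

/-- the size of a derivation: the number of inference steps occurring in it -/
def size : ∀ {Γ Δ}, Deriv Γ Δ → ℕ
  | _, _, ax _ => 1
  | _, _, andL _ _ _ _ d => d.size + 1
  | _, _, andR _ _ _ _ _ _ d e => d.size + e.size + 1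
  | _, _, orL _ _ _ _ _ _ d e => d.size + e.size + 1
  | _, _, orR _ _ _ _ d => d.size + 1
  | _, _, impL _ _ _ _ _ _ d e => d.size + e.size + 1
  | _, _, impR _ _ _ _ d => d.size + 1
  | _, _, notL _ _ _ d => d.size + 1
  | _, _, notR _ _ _ d => d.size + 1
  | _, _, wL _ _ _ d => d.size + 1
  | _, _, wR _ _ _ d => d.size + 1
  | _, _, cL _ _ _ d => d.size + 1
  | _, _, cR _ _ _ d => d.size + 1
  | _, _, cut _ _ _ _ _ d e => d.size + e.size + 1
  | _, _, allL _ _ _ _ d => d.size + 1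
  | _, _, allR _ _ _ _ d => d.size + 1
  | _, _, exL _ _ _ _ d => d.size + 1
  | _, _, exR _ _ _ _ d => d.size + 1
  | _, _, permL _ _ _ _ d => d.size + 1
  | _, _, permR _ _ _ _ d => d.size + 1

/-- the list of cut formulas occurring in a derivation -/
def cutFms : ∀ {Γ Δ}, Deriv Γ Δ → List Fm
  | _, _, ax _ => []
  | _, _, andL _ _ _ _ d => d.cutFms
  | _, _, andR _ _ _ _ _ _ d e => d.cutFms ++ e.cutFms
  | _, _, orL _ _ _ _ _ _ d e => d.cutFms ++ e.cutFms
  | _, _, orR _ _ _ _ d => d.cutFms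
  | _, _, impL _ _ _ _ _ _ d e => d.cutFms ++ e.cutFms
  | _, _, impR _ _ _ _ d => d.cutFms
  | _, _, notL _ _ _ d => d.cutFms
  | _, _, notR _ _ _ d => d.cutFms
  | _, _, wL _ _ _ d => d.cutFms
  | _, _, wR _ _ _ d => d.cutFms
  | _, _, cL _ _ _ d => d.cutFms
  | _, _, cR _ _ _ d => d.cutFms
  | _, _, cut A _ _ _ _ d e => A :: (d.cutFms ++ e.cutFms)
  | _, _, allL _ _ _ _ d => d.cutFms
  | _, _, allR _ _ _ _ d => d.cutFms
  | _, _, exL _ _ _ _ d => d.cutFms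
  | _, _, exR _ _ _ _ d => d.cutFms
  | _, _, permL _ _ _ _ d => d.cutFms
  | _, _, permR _ _ _ _ d => d.cutFms

/-- data of the strong quantifier inferences of a derivation:
(eigenvariable, auxiliary formula, main formula) -/
def strongs : ∀ {Γ Δ}, Deriv Γ Δ → List (ℕ × Fm × Fm)
  | _, _, ax _ => []
  | _, _, andL _ _ _ _ d => d.strongs
  | _, _, andR _ _ _ _ _ _ d e => d.strongs ++ e.strongs
  | _, _, orL _ _ _ _ _ _ d e => d.strongs ++ e.strongs
  | _, _, orR _ _ _ _ d => d.strongs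
  | _, _, impL _ _ _ _ _ _ d e => d.strongs ++ e.strongs
  | _, _, impR _ _ _ _ d => d.strongs
  | _, _, notL _ _ _ d => d.strongs
  | _, _, notR _ _ _ d => d.strongs
  | _, _, wL _ _ _ d => d.strongs
  | _, _, wR _ _ _ d => d.strongs
  | _, _, cL _ _ _ d => d.strongs
  | _, _, cR _ _ _ d => d.strongs
  | _, _, cut _ _ _ _ _ d e => d.strongs ++ e.strongs
  | _, _, allL _ _ _ _ d => d.strongs
  | _, _, allR a A _ _ d => (a, inst0 A (Tm.fvar a), Fm.all A) :: d.strongs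
  | _, _, exL a A _ _ d => (a, inst0 A (Tm.fvar a), Fm.ex A) :: d.strongs
  | _, _, exR _ _ _ _ d => d.strongs
  | _, _, permL _ _ _ _ d => d.strongs
  | _, _, permR _ _ _ _ d => d.strongs

/-- the standard (local) eigenvariable conditions of LK: the eigenvariable of a
strong quantifier inference does not occur free in its conclusion -/
def Std : ∀ {Γ Δ}, Deriv Γ Δ → Prop
  | _, _, ax _ => True
  | _, _, andL _ _ _ _ d => d.Std
  | _, _, andR _ _ _ _ _ _ d e => d.Std ∧ e.Std
  | _, _, orL _ _ _ _ _ _ d e => d.Std ∧ e.Std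
  | _, _, orR _ _ _ _ d => d.Std
  | _, _, impL _ _ _ _ _ _ d e => d.Std ∧ e.Std
  | _, _, impR _ _ _ _ d => d.Std
  | _, _, notL _ _ _ d => d.Std
  | _, _, notR _ _ _ d => d.Std
  | _, _, wL _ _ _ d => d.Std
  | _, _, wR _ _ _ d => d.Std
  | _, _, cL _ _ _ d => d.Std
  | _, _, cR _ _ _ d => d.Std
  | _, _, cut _ _ _ _ _ d e => d.Std ∧ e.Std
  | _, _, allL _ _ _ _ d => d.Std
  | _, _, allR a A Γ Δ d => a ∉ fvSeq Γ (Fm.all A :: Δ) ∧ d.Std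
  | _, _, exL a A Γ Δ d => a ∉ fvSeq (Fm.ex A :: Γ) Δ ∧ d.Std
  | _, _, exR _ _ _ _ d => d.Std
  | _, _, permL _ _ _ _ d => d.Std
  | _, _, permR _ _ _ _ d => d.Std

end Deriv

/-- the side variable relation `<_φ`: `b` is a side variable of `a` in `φ` if `φ`
contains a strong quantifier inference with eigenvariable `a` whose auxiliary
formula contains the free variable `b` -/
def sideRel {Γ Δ} (d : Deriv Γ Δ) (a b : ℕ) : Prop :=
  ∃ e ∈ d.strongs, e.1 = a ∧ b ∈ fvF e.2.1 ∧ b ≠ a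

/-- acyclicity of a binary relation -/
def Acyc (r : ℕ → ℕ → Prop) : Prop := ∀ x, ¬ Relation.TransGen r x x

/-- LK⁺-suitability of (all strong quantifier inferences of) a derivation:
substitutability, the side variable condition, and weak regularity. -/
def SuitP {Γ Δ} (d : Deriv Γ Δ) : Prop :=
  (∀ e ∈ d.strongs, e.1 ∉ fvSeq Γ Δ) ∧
  Acyc (sideRel d) ∧
  (d.strongs.map (·.1)).Nodup

/-- LK⁺⁺-suitability: substitutability, the side variable condition, and very
weak regularity (equal eigenvariables only for equal main formulas). -/
def SuitPP {Γ Δ} (d : Deriv Γ Δ) : Prop :=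
  (∀ e ∈ d.strongs, e.1 ∉ fvSeq Γ Δ) ∧
  Acyc (sideRel d) ∧
  (∀ e₁ ∈ d.strongs, ∀ e₂ ∈ d.strongs, e₁.1 = e₂.1 → e₁.2.2 = e₂.2.2)

/-! ## The sequent calculus Lε of the epsilon calculus:
atomic axioms, the propositional, structural and cut rules of LK, the weak
quantifier rules ∃_r and ∀_l producing epsilon terms, and a substitution rule
replacing the strong quantifier inferences. -/
inductive EDeriv : List Fm → List Fm → Type where
  | ax (p : ℕ) (ts : Tms) : EDeriv [Fm.atom p ts] [Fm.atom p ts]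
  | andL (A B : Fm) (Γ Δ : List Fm) :
      EDeriv (A :: B :: Γ) Δ → EDeriv (Fm.and A B :: Γ) Δ
  | andR (A B : Fm) (Γ₁ Δ₁ Γ₂ Δ₂ : List Fm) :
      EDeriv Γ₁ (A :: Δ₁) → EDeriv Γ₂ (B :: Δ₂) →
      EDeriv (Γ₁ ++ Γ₂) (Fm.and A B :: (Δ₁ ++ Δ₂))
  | orL (A B : Fm) (Γ₁ Δ₁ Γ₂ Δ₂ : List Fm) :
      EDeriv (A :: Γ₁) Δ₁ → EDeriv (B :: Γ₂) Δ₂ →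
      EDeriv (Fm.or A B :: (Γ₁ ++ Γ₂)) (Δ₁ ++ Δ₂)
  | orR (A B : Fm) (Γ Δ : List Fm) :
      EDeriv Γ (A :: B :: Δ) → EDeriv Γ (Fm.or A B :: Δ)
  | impL (A B : Fm) (Γ₁ Δ₁ Γ₂ Δ₂ : List Fm) :
      EDeriv Γ₁ (A :: Δ₁) → EDeriv (B :: Γ₂) Δ₂ →
      EDeriv (Fm.imp A B :: (Γ₁ ++ Γ₂)) (Δ₁ ++ Δ₂)
  | impR (A B : Fm) (Γ Δ : List Fm) :
      EDeriv (A :: Γ) (B :: Δ) → EDeriv Γ (Fm.imp A B :: Δ)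
  | notL (A : Fm) (Γ Δ : List Fm) :
      EDeriv Γ (A :: Δ) → EDeriv (Fm.not A :: Γ) Δ
  | notR (A : Fm) (Γ Δ : List Fm) :
      EDeriv (A :: Γ) Δ → EDeriv Γ (Fm.not A :: Δ)
  | wL (A : Fm) (Γ Δ : List Fm) : EDeriv Γ Δ → EDeriv (A :: Γ) Δ
  | wR (A : Fm) (Γ Δ : List Fm) : EDeriv Γ Δ → EDeriv Γ (A :: Δ)
  | cL (A : Fm) (Γ Δ : List Fm) : EDeriv (A :: A :: Γ) Δ → EDeriv (A :: Γ) Δ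
  | cR (A : Fm) (Γ Δ : List Fm) : EDeriv Γ (A :: A :: Δ) → EDeriv Γ (A :: Δ)
  | cut (A : Fm) (Γ₁ Δ₁ Γ₂ Δ₂ : List Fm) :
      EDeriv Γ₁ (A :: Δ₁) → EDeriv (A :: Γ₂) Δ₂ →
      EDeriv (Γ₁ ++ Γ₂) (Δ₁ ++ Δ₂)
  | allL (t : Tm) (A : Fm) (Γ Δ : List Fm) :
      EDeriv (inst0 A t :: Γ) Δ →
      EDeriv (inst0 A (Tm.eps (Fm.not A)) :: Γ) Δ
  | exR (t : Tm) (A : Fm) (Γ Δ : List Fm) :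
      EDeriv Γ (inst0 A t :: Δ) →
      EDeriv Γ (inst0 A (Tm.eps A) :: Δ)
  | subst (a : ℕ) (t : Tm) (Γ Δ : List Fm) :
      EDeriv Γ Δ → EDeriv (Γ.map (sfvF a t)) (Δ.map (sfvF a t))
  | permL (Γ Γ' Δ : List Fm) : Γ.Perm Γ' → EDeriv Γ Δ → EDeriv Γ' Δ
  | permR (Γ Δ Δ' : List Fm) : Δ.Perm Δ' → EDeriv Γ Δ → EDeriv Γ Δ'

namespace EDeriv

/-- the size of an Lε derivation -/
def size : ∀ {Γ Δ}, EDeriv Γ Δ → ℕ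
  | _, _, ax _ _ => 1
  | _, _, andL _ _ _ _ d => d.size + 1
  | _, _, andR _ _ _ _ _ _ d e => d.size + e.size + 1
  | _, _, orL _ _ _ _ _ _ d e => d.size + e.size + 1
  | _, _, orR _ _ _ _ d => d.size + 1
  | _, _, impL _ _ _ _ _ _ d e => d.size + e.size + 1
  | _, _, impR _ _ _ _ d => d.size + 1
  | _, _, notL _ _ _ d => d.size + 1
  | _, _, notR _ _ _ d => d.size + 1
  | _, _, wL _ _ _ d => d.size + 1
  | _, _, wR _ _ _ d => d.size + 1
  | _, _, cL _ _ _ d => d.size + 1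
  | _, _, cR _ _ _ d => d.size + 1
  | _, _, cut _ _ _ _ _ d e => d.size + e.size + 1
  | _, _, allL _ _ _ _ d => d.size + 1
  | _, _, exR _ _ _ _ d => d.size + 1
  | _, _, subst _ _ _ _ d => d.size + 1
  | _, _, permL _ _ _ _ d => d.size + 1
  | _, _, permR _ _ _ _ d => d.size + 1

/-- the list of cut formulas occurring in an Lε derivation -/
def cutFms : ∀ {Γ Δ}, EDeriv Γ Δ → List Fm
  | _, _, ax _ _ => []
  | _, _, andL _ _ _ _ d => d.cutFms
  | _, _, andR _ _ _ _ _ _ d e => d.cutFms ++ e.cutFms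
  | _, _, orL _ _ _ _ _ _ d e => d.cutFms ++ e.cutFms
  | _, _, orR _ _ _ _ d => d.cutFms
  | _, _, impL _ _ _ _ _ _ d e => d.cutFms ++ e.cutFms
  | _, _, impR _ _ _ _ d => d.cutFms
  | _, _, notL _ _ _ d => d.cutFms
  | _, _, notR _ _ _ d => d.cutFms
  | _, _, wL _ _ _ d => d.cutFms
  | _, _, wR _ _ _ d => d.cutFms
  | _, _, cL _ _ _ d => d.cutFms
  | _, _, cR _ _ _ d => d.cutFms
  | _, _, cut A _ _ _ _ d e => A :: (d.cutFms ++ e.cutFms)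
  | _, _, allL _ _ _ _ d => d.cutFms
  | _, _, exR _ _ _ _ d => d.cutFms
  | _, _, subst _ _ _ _ d => d.cutFms
  | _, _, permL _ _ _ _ d => d.cutFms
  | _, _, permR _ _ _ _ d => d.cutFms

end EDeriv

/-! ## Elementary functions and polynomial bounds -/

/-- `iterExp k n` is the `k`-fold iterated exponential 2^2^...^n. -/
def iterExp : ℕ → ℕ → ℕ
  | 0, n => n
  | k+1, n => 2 ^ iterExp k n

/-- A function ℕ → ℕ is elementary (in the sense of Kalmár: definable by a
quantifier-free formula from +, ×, and x ↦ 2^x) iff it is majorized by some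
fixed iterated exponential; we use this growth-rate characterization. -/
def IsElementary (f : ℕ → ℕ) : Prop := ∃ k, ∀ n, f n ≤ iterExp k n

/-- `g` is polynomially bounded -/
def PolyBdd (g : ℕ → ℕ) : Prop := ∃ p : Polynomial ℕ, ∀ n, g n ≤ p.eval n

/-! ## Skolemization (relationally): `SkP F A B` (`SkN F A B`) holds if `B` is
obtained from `A`, occurring in the succedent (antecedent), by replacing the
strong quantifiers by terms built from fresh function symbols in `F`. -/
mutual
inductive SkP (F : ℕ → Prop) : Fm → Fm → Prop where
  | atom (p ts) : SkP F (Fm.atom p ts) (Fm.atom p ts)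
  | and {A A' B B'} : SkP F A A' → SkP F B B' → SkP F (Fm.and A B) (Fm.and A' B')
  | or {A A' B B'} : SkP F A A' → SkP F B B' → SkP F (Fm.or A B) (Fm.or A' B')
  | imp {A A' B B'} : SkN F A A' → SkP F B B' → SkP F (Fm.imp A B) (Fm.imp A' B')
  | not {A A'} : SkN F A A' → SkP F (Fm.not A) (Fm.not A')
  | ex {A A'} : SkP F A A' → SkP F (Fm.ex A) (Fm.ex A')
  | all {A B} (f : ℕ) (ts : Tms) : F f →
      SkP F (inst0 A (Tm.func f ts)) B → SkP F (Fm.all A) B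
inductive SkN (F : ℕ → Prop) : Fm → Fm → Prop where
  | atom (p ts) : SkN F (Fm.atom p ts) (Fm.atom p ts)
  | and {A A' B B'} : SkN F A A' → SkN F B B' → SkN F (Fm.and A B) (Fm.and A' B')
  | or {A A' B B'} : SkN F A A' → SkN F B B' → SkN F (Fm.or A B) (Fm.or A' B')
  | imp {A A' B B'} : SkP F A A' → SkN F B B' → SkN F (Fm.imp A B) (Fm.imp A' B')
  | not {A A'} : SkP F A A' → SkN F (Fm.not A) (Fm.not A')
  | all {A A'} : SkN F A A' → SkN F (Fm.all A) (Fm.all A')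
  | ex {A B} (f : ℕ) (ts : Tms) : F f →
      SkN F (inst0 A (Tm.func f ts)) B → SkN F (Fm.ex A) B
end

/-- `S'` is a Skolemization of the sequent `S` using fresh function symbols from `F` -/
def SkolemSeq (F : ℕ → Prop) (S S' : List Fm × List Fm) : Prop :=
  List.Forall₂ (SkN F) S.1 S'.1 ∧ List.Forall₂ (SkP F) S.2 S'.2

/-! The combinator `double`, with `double f x = f (f x)`, makes the tower term
`T = double … double succ 0` denote a stack of `n` exponentials in the full type hierarchy over `ℕ`.
From `P 0`, the closure of `P` under successor and equations for `double`, the calculus proves `P T`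
quickly by cutting on "`double` is hereditarily number-preserving".

Without cuts, a sequent whose quantifiers are all weak has a proof without eigenvariables, hence a
proof of size `N` only uses the antecedent at `N` instance terms. If some `m` below the value of `T`
is not the value of any of them, then reading `P x` as `x ≤ m` satisfies all these instances but not
`P T`. So there are at least as many instance terms as numbers below the value of `T`. Adding
`∀x̄ (A^M → A^M)` for the cut formula `A` to the antecedent does not affect this argument, since the
formula is true when its quantifiers range over any set of terms.

The cut formula has size exponential in its type, so the `i`-th sequent of the family uses a tower
of height `log₂ i`; the lower bound remains non-elementary in `i`. -/

/-! ### Substitution, abstraction and matrices -/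

mutual

theorem liftT_liftT {j : ℕ} : ∀ (t : Tm) {k : ℕ}, j ≤ k →
    liftT (k + 1) (liftT j t) = liftT j (liftT k t)
  | .bvar n, k, h => by
    simp only [liftT]
    split_ifs <;> simp only [liftT] <;> split_ifs <;> first | rfl | omega
  | .fvar _, _, _ => rfl
  | .func _ ts, _, h => by simp only [liftT, liftTs_liftTs ts h]
  | .eps A, _, h => by simp only [liftT, liftF_liftF A (Nat.succ_le_succ h)]

theorem liftTs_liftTs {j : ℕ} : ∀ (ts : Tms) {k : ℕ}, j ≤ k →
    liftTs (k + 1) (liftTs j ts) = liftTs j (liftTs k ts)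
  | .nil, _, _ => rfl
  | .cons t ts, _, h => by simp only [liftTs, liftT_liftT t h, liftTs_liftTs ts h]

theorem liftF_liftF {j : ℕ} : ∀ (A : Fm) {k : ℕ}, j ≤ k →
    liftF (k + 1) (liftF j A) = liftF j (liftF k A)
  | .atom _ ts, _, h => by simp only [liftF, liftTs_liftTs ts h]
  | .and A B, _, h | .or A B, _, h | .imp A B, _, h => by
    simp only [liftF, liftF_liftF A h, liftF_liftF B h]
  | .not A, _, h => by simp only [liftF, liftF_liftF A h]
  | .all A, _, h | .ex A, _, h => by simp only [liftF, liftF_liftF A (Nat.succ_le_succ h)]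

end

mutual

@[simp]
theorem subT_liftT_cancel : ∀ (t : Tm) (k : ℕ) (u : Tm), subT k u (liftT k t) = t
  | .bvar n, k, u => by
    simp only [liftT]
    split_ifs <;> simp only [subT] <;> split_ifs <;> first | rfl | omega
  | .fvar _, _, _ => rfl
  | .func _ ts, _, _ => by simp only [liftT, subT, subTs_liftTs_cancel ts]
  | .eps A, _, _ => by simp only [liftT, subT, subF_liftF_cancel A]

theorem subTs_liftTs_cancel : ∀ (ts : Tms) (k : ℕ) (u : Tm), subTs k u (liftTs k ts) = ts
  | .nil, _, _ => rfl
  | .cons t ts, _, _ => by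
    simp only [liftTs, subTs, subT_liftT_cancel t, subTs_liftTs_cancel ts]

theorem subF_liftF_cancel : ∀ (A : Fm) (k : ℕ) (u : Tm), subF k u (liftF k A) = A
  | .atom _ ts, _, _ => by simp only [liftF, subF, subTs_liftTs_cancel ts]
  | .and A B, _, _ | .or A B, _, _ | .imp A B, _, _ => by
    simp only [liftF, subF, subF_liftF_cancel A, subF_liftF_cancel B]
  | .not A, _, _ | .all A, _, _ | .ex A, _, _ => by
    simp only [liftF, subF, subF_liftF_cancel A]

end

mutual

theorem subT_liftT {j : ℕ} : ∀ (t : Tm) {k : ℕ} (u : Tm), j ≤ k →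
    subT (k + 1) (liftT j u) (liftT j t) = liftT j (subT k u t)
  | .bvar n, k, u, h => by
    simp only [liftT, subT]
    split_ifs <;> simp only [liftT, subT] <;> split_ifs <;> grind
  | .fvar _, _, _, _ => rfl
  | .func _ ts, _, u, h => by simp only [liftT, subT, subTs_liftTs ts u h]
  | .eps A, _, u, h => by
    simp only [liftT, subT, ← liftT_liftT u (Nat.zero_le j),
      subF_liftF A (liftT 0 u) (Nat.succ_le_succ h)]

theorem subTs_liftTs {j : ℕ} : ∀ (ts : Tms) {k : ℕ} (u : Tm), j ≤ k →
    subTs (k + 1) (liftT j u) (liftTs j ts) = liftTs j (subTs k u ts)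
  | .nil, _, _, _ => rfl
  | .cons t ts, _, u, h => by simp only [liftTs, subTs, subT_liftT t u h, subTs_liftTs ts u h]

theorem subF_liftF {j : ℕ} : ∀ (A : Fm) {k : ℕ} (u : Tm), j ≤ k →
    subF (k + 1) (liftT j u) (liftF j A) = liftF j (subF k u A)
  | .atom _ ts, _, u, h => by simp only [liftF, subF, subTs_liftTs ts u h]
  | .and A B, _, u, h | .or A B, _, u, h | .imp A B, _, u, h => by
    simp only [liftF, subF, subF_liftF A u h, subF_liftF B u h]
  | .not A, _, u, h => by simp only [liftF, subF, subF_liftF A u h]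
  | .all A, _, u, h | .ex A, _, u, h => by
    simp only [liftF, subF, ← liftT_liftT u (Nat.zero_le j),
      subF_liftF A (liftT 0 u) (Nat.succ_le_succ h)]

end

mutual

@[simp]
theorem szT_liftT : ∀ (t : Tm) (k : ℕ), szT (liftT k t) = szT t
  | .bvar _, _ => by simp only [liftT]; split_ifs <;> rfl
  | .fvar _, _ => rfl
  | .func _ ts, _ => by simp only [liftT, szT, szTs_liftTs ts]
  | .eps A, _ => by simp only [liftT, szT, szF_liftF A]

theorem szTs_liftTs : ∀ (ts : Tms) (k : ℕ), szTs (liftTs k ts) = szTs ts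
  | .nil, _ => rfl
  | .cons t ts, _ => by simp only [liftTs, szTs, szT_liftT t, szTs_liftTs ts]

theorem szF_liftF : ∀ (A : Fm) (k : ℕ), szF (liftF k A) = szF A
  | .atom _ ts, _ => by simp only [liftF, szF, szTs_liftTs ts]
  | .and A B, _ | .or A B, _ | .imp A B, _ => by
    simp only [liftF, szF, szF_liftF A, szF_liftF B]
  | .not A, _ | .all A, _ | .ex A, _ => by simp only [liftF, szF, szF_liftF A]

end

mutual

theorem szT_abT : ∀ (t : Tm) (a k : ℕ), szT (abT a k t) = szT t
  | .bvar _, _, _ => rfl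
  | .fvar _, _, _ => by simp only [abT]; split_ifs <;> rfl
  | .func _ ts, _, _ => by simp only [abT, szT, szTs_abTs ts]
  | .eps A, _, _ => by simp only [abT, szT, szF_abF A]

theorem szTs_abTs : ∀ (ts : Tms) (a k : ℕ), szTs (abTs a k ts) = szTs ts
  | .nil, _, _ => rfl
  | .cons t ts, _, _ => by simp only [abTs, szTs, szT_abT t, szTs_abTs ts]

theorem szF_abF : ∀ (A : Fm) (a k : ℕ), szF (abF a k A) = szF A
  | .atom _ ts, _, _ => by simp only [abF, szF, szTs_abTs ts]
  | .and A B, _, _ | .or A B, _, _ | .imp A B, _, _ => by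
    simp only [abF, szF, szF_abF A, szF_abF B]
  | .not A, _, _ | .all A, _, _ | .ex A, _, _ => by simp only [abF, szF, szF_abF A]

end

mutual

theorem szT_mxT : ∀ (t : Tm) (b d : ℕ), szT (mxT b d t) = szT t
  | .bvar _, _, _ => by simp only [mxT]; split_ifs <;> rfl
  | .fvar _, _, _ => rfl
  | .func _ ts, _, _ => by simp only [mxT, szT, szTs_mxTs ts]
  | .eps _, _, _ => rfl

theorem szTs_mxTs : ∀ (ts : Tms) (b d : ℕ), szTs (mxTs b d ts) = szTs ts
  | .nil, _, _ => rfl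
  | .cons t ts, _, _ => by simp only [mxTs, szTs, szT_mxT t, szTs_mxTs ts]

end

theorem szF_mxF_le : ∀ (A : Fm) (b d : ℕ), szF (mxF b d A) ≤ szF A
  | .atom _ ts, _, _ => by simp only [mxF, szF, szTs_mxTs, le_refl]
  | .and A B, b, d | .or A B, b, d | .imp A B, b, d => by
    simp only [mxF, szF]
    gcongr
    exacts [szF_mxF_le A b d, szF_mxF_le B b d]
  | .not A, b, d => by simpa only [mxF, szF] using Nat.add_le_add_left (szF_mxF_le A b d) 1
  | .all A, b, d | .ex A, b, d => by
    simpa only [mxF, szF] using (szF_mxF_le A b (d + 1)).trans (Nat.le_add_left _ 1)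

theorem szF_matrix_le (A : Fm) : szF (matrix A) ≤ szF A :=
  szF_mxF_le A _ _

mutual

theorem length_fvT_le_szT : ∀ t : Tm, (fvT t).length ≤ szT t
  | .bvar _ => by simp [fvT]
  | .fvar _ => le_rfl
  | .func _ ts => by simpa [fvT, szT] using (length_fvTs_le_szTs ts).trans (Nat.le_add_left _ 1)
  | .eps A => by simpa [fvT, szT] using (length_fvF_le_szF A).trans (Nat.le_add_left _ 1)

theorem length_fvTs_le_szTs : ∀ ts : Tms, (fvTs ts).length ≤ szTs ts
  | .nil => le_rfl
  | .cons t ts => by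
    simpa [fvTs, szTs] using Nat.add_le_add (length_fvT_le_szT t) (length_fvTs_le_szTs ts)

theorem length_fvF_le_szF : ∀ A : Fm, (fvF A).length ≤ szF A
  | .atom _ ts => by simpa [fvF, szF] using (length_fvTs_le_szTs ts).trans (Nat.le_add_left _ 1)
  | .and A B | .or A B | .imp A B => by
    have := length_fvF_le_szF A
    have := length_fvF_le_szF B
    simp only [fvF, szF, List.length_append]
    omega
  | .not A | .all A | .ex A => by
    simpa [fvF, szF] using (length_fvF_le_szF A).trans (Nat.le_add_left _ 1)

end

theorem szF_uclose_le (A : Fm) : szF (uclose A) ≤ 2 * szF A := by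
  have szF_foldr (l : List ℕ) :
      szF (l.foldr (fun a B => Fm.all (abF a 0 B)) A) = l.length + szF A := by
    induction l with
    | nil => simp
    | cons a l ih => simp only [List.foldr_cons, szF, szF_abF, ih, List.length_cons]; omega
  calc szF (uclose A) = (fvF A).dedup.length + szF A := szF_foldr _
    _ ≤ szF A + szF A :=
      Nat.add_le_add_right ((List.dedup_sublist _).length_le.trans (length_fvF_le_szF A)) _
    _ = 2 * szF A := (two_mul _).symm

mutual

@[simp]
theorem noEpsT_liftT : ∀ (t : Tm) (k : ℕ), noEpsT (liftT k t) = noEpsT t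
  | .bvar _, _ => by simp only [liftT]; split_ifs <;> rfl
  | .fvar _, _ | .eps _, _ => rfl
  | .func _ ts, _ => by simp only [liftT, noEpsT, noEpsTs_liftTs ts]

theorem noEpsTs_liftTs : ∀ (ts : Tms) (k : ℕ), noEpsTs (liftTs k ts) = noEpsTs ts
  | .nil, _ => rfl
  | .cons t ts, _ => by simp only [liftTs, noEpsTs, noEpsT_liftT t, noEpsTs_liftTs ts]

end

mutual

theorem noEpsT_abT : ∀ (t : Tm) (a k : ℕ), noEpsT (abT a k t) = noEpsT t
  | .bvar _, _, _ | .eps _, _, _ => rfl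
  | .fvar _, _, _ => by simp only [abT]; split_ifs <;> rfl
  | .func _ ts, _, _ => by simp only [abT, noEpsT, noEpsTs_abTs ts]

theorem noEpsTs_abTs : ∀ (ts : Tms) (a k : ℕ), noEpsTs (abTs a k ts) = noEpsTs ts
  | .nil, _, _ => rfl
  | .cons t ts, _, _ => by simp only [abTs, noEpsTs, noEpsT_abT t, noEpsTs_abTs ts]

end

@[simp]
theorem noEpsF_abF : ∀ (A : Fm) (a k : ℕ), noEpsF (abF a k A) = noEpsF A
  | .atom _ ts, _, _ => by simp only [abF, noEpsF, noEpsTs_abTs]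
  | .and A B, _, _ | .or A B, _, _ | .imp A B, _, _ => by
    simp only [abF, noEpsF, noEpsF_abF A, noEpsF_abF B]
  | .not A, _, _ | .all A, _, _ | .ex A, _, _ => by simp only [abF, noEpsF, noEpsF_abF A]

@[simp]
theorem noEpsF_uclose (A : Fm) : noEpsF (uclose A) = noEpsF A := by
  unfold uclose
  induction (fvF A).dedup with
  | nil => rfl
  | cons a l ih => simpa [noEpsF] using ih

mutual

theorem noEpsT_mxT : ∀ (t : Tm) (b d : ℕ), noEpsT (mxT b d t) = noEpsT t
  | .bvar _, _, _ => by simp only [mxT]; split_ifs <;> rfl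
  | .fvar _, _, _ | .eps _, _, _ => rfl
  | .func _ ts, _, _ => by simp only [mxT, noEpsT, noEpsTs_mxTs ts]

theorem noEpsTs_mxTs : ∀ (ts : Tms) (b d : ℕ), noEpsTs (mxTs b d ts) = noEpsTs ts
  | .nil, _, _ => rfl
  | .cons t ts, _, _ => by simp only [mxTs, noEpsTs, noEpsT_mxT t, noEpsTs_mxTs ts]

end

@[simp]
theorem noEpsF_mxF : ∀ (A : Fm) (b d : ℕ), noEpsF (mxF b d A) = noEpsF A
  | .atom _ ts, _, _ => by simp only [mxF, noEpsF, noEpsTs_mxTs]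
  | .and A B, _, _ | .or A B, _, _ | .imp A B, _, _ => by
    simp only [mxF, noEpsF, noEpsF_mxF A, noEpsF_mxF B]
  | .not A, _, _ | .all A, _, _ | .ex A, _, _ => by simp only [mxF, noEpsF, noEpsF_mxF A]

@[simp]
theorem noEpsF_matrix (A : Fm) : noEpsF (matrix A) = noEpsF A :=
  noEpsF_mxF A _ _

mutual

@[simp]
theorem posW_subF : ∀ (A : Fm) (k : ℕ) (u : Tm), posW (subF k u A) = posW A
  | .atom _ _, _, _ | .all _, _, _ => rfl
  | .and A B, _, _ | .or A B, _, _ => by simp only [subF, posW, posW_subF A, posW_subF B]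
  | .imp A B, _, _ => by simp only [subF, posW, negW_subF A, posW_subF B]
  | .not A, _, _ => by simp only [subF, posW, negW_subF A]
  | .ex A, _, _ => by simp only [subF, posW, posW_subF A]

@[simp]
theorem negW_subF : ∀ (A : Fm) (k : ℕ) (u : Tm), negW (subF k u A) = negW A
  | .atom _ _, _, _ | .ex _, _, _ => rfl
  | .and A B, _, _ | .or A B, _, _ => by simp only [subF, negW, negW_subF A, negW_subF B]
  | .imp A B, _, _ => by simp only [subF, negW, posW_subF A, negW_subF B]
  | .not A, _, _ => by simp only [subF, negW, posW_subF A]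
  | .all A, _, _ => by simp only [subF, negW, negW_subF A]

end

mutual

theorem posW_abF : ∀ (A : Fm) (a k : ℕ), posW (abF a k A) = posW A
  | .atom _ _, _, _ | .all _, _, _ => rfl
  | .and A B, _, _ | .or A B, _, _ => by simp only [abF, posW, posW_abF A, posW_abF B]
  | .imp A B, _, _ => by simp only [abF, posW, negW_abF A, posW_abF B]
  | .not A, _, _ => by simp only [abF, posW, negW_abF A]
  | .ex A, _, _ => by simp only [abF, posW, posW_abF A]

theorem negW_abF : ∀ (A : Fm) (a k : ℕ), negW (abF a k A) = negW A
  | .atom _ _, _, _ | .ex _, _, _ => rfl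
  | .and A B, _, _ | .or A B, _, _ => by simp only [abF, negW, negW_abF A, negW_abF B]
  | .imp A B, _, _ => by simp only [abF, negW, posW_abF A, negW_abF B]
  | .not A, _, _ => by simp only [abF, negW, posW_abF A]
  | .all A, _, _ => by simp only [abF, negW, negW_abF A]

end

@[simp]
theorem negW_uclose (A : Fm) : negW (uclose A) = negW A := by
  unfold uclose
  induction (fvF A).dedup with
  | nil => rfl
  | cons a l ih => simpa [negW, negW_abF] using ih

mutual

theorem posW_of_qfree : ∀ {A : Fm}, qfree A → posW A
  | .atom _ _, _ => rfl
  | .and A B, h | .or A B, h => by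
    simp only [qfree, posW, Bool.and_eq_true] at h ⊢
    exact ⟨posW_of_qfree h.1, posW_of_qfree h.2⟩
  | .imp A B, h => by
    simp only [qfree, posW, Bool.and_eq_true] at h ⊢
    exact ⟨negW_of_qfree h.1, posW_of_qfree h.2⟩
  | .not A, h => negW_of_qfree (A := A) h

theorem negW_of_qfree : ∀ {A : Fm}, qfree A → negW A
  | .atom _ _, _ => rfl
  | .and A B, h | .or A B, h => by
    simp only [qfree, negW, Bool.and_eq_true] at h ⊢
    exact ⟨negW_of_qfree h.1, negW_of_qfree h.2⟩
  | .imp A B, h => by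
    simp only [qfree, negW, Bool.and_eq_true] at h ⊢
    exact ⟨posW_of_qfree h.1, negW_of_qfree h.2⟩
  | .not A, h => posW_of_qfree (A := A) h

end

theorem qfree_mxF : ∀ (A : Fm) (b d : ℕ), qfree (mxF b d A)
  | .atom _ _, _, _ => rfl
  | .and A B, b, d | .or A B, b, d | .imp A B, b, d => by
    simp only [mxF, qfree, qfree_mxF A, qfree_mxF B, Bool.and_self]
  | .not A, b, d => qfree_mxF A b d
  | .all A, b, d | .ex A, b, d => qfree_mxF A b (d + 1)

theorem qfree_matrix (A : Fm) : qfree (matrix A) :=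
  qfree_mxF A _ _

/-! ### Applicative terms and hereditary formulas -/

namespace Tm

/-- Application of `s` to `t`, as the binary function symbol `0`. -/
def app (s t : Tm) : Tm := .func 0 (.cons s (.cons t .nil))

/-- The combinator `f ↦ f ∘ f`, as the constant symbol `1`; doubling and iterated exponentials are
obtained from it by application. -/
def double : Tm := .func 1 .nil

/-- The constant symbol `2`, standing for the successor function. -/
def succ : Tm := .func 2 .nil

/-- The constant symbol `3`, standing for the number `0`. -/
def zero : Tm := .func 3 .nil

end Tm

local infixl:75 " ⬝ " => Tm.app

/-- The atom saying that `t` is a number, as the unary predicate symbol `0`. -/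
def Fm.num (t : Tm) : Fm := .atom 0 (.cons t .nil)

/-- The atom saying that `s` and `t` are equal, as the binary predicate symbol `1`. -/
def Fm.eqv (s t : Tm) : Fm := .atom 1 (.cons s (.cons t .nil))

/-- `hered k t` says that `t` hereditarily maps numbers to numbers at the pure type `k`. -/
def hered : ℕ → Tm → Fm
  | 0, t => .num t
  | k + 1, t => .all (.imp (hered k (.bvar 0)) (hered k (liftT 0 t ⬝ .bvar 0)))

@[simp]
theorem subT_app (k : ℕ) (u s t : Tm) : subT k u (s ⬝ t) = subT k u s ⬝ subT k u t :=
  rfl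

@[simp]
theorem subF_eqv (k : ℕ) (u s t : Tm) : subF k u (.eqv s t) = .eqv (subT k u s) (subT k u t) :=
  rfl

@[simp]
theorem subF_num (k : ℕ) (u t : Tm) : subF k u (.num t) = .num (subT k u t) :=
  rfl

@[simp]
theorem subF_hered : ∀ (n k : ℕ) (u t : Tm), subF k u (hered n t) = hered n (subT k u t)
  | 0, _, _, _ => rfl
  | n + 1, k, u, t => by
    simp only [hered, subF, subF_hered n, subT_app, subT_liftT t u (Nat.zero_le k)]
    simp [subT]

theorem inst0_hered_imp (k : ℕ) (t u : Tm) :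
    inst0 (.imp (hered k (.bvar 0)) (hered k (liftT 0 t ⬝ .bvar 0))) u =
      .imp (hered k u) (hered k (t ⬝ u)) := by
  simp [inst0, subF, subT]

/-- The universal formula `∀ f x, double f x = f (f x)`. -/
def doubleLaw : Fm :=
  .all (.all (.eqv (.double ⬝ .bvar 1 ⬝ .bvar 0) (.bvar 1 ⬝ (.bvar 1 ⬝ .bvar 0))))

/-- The universal formula `∀ f g x, f = g → f x = g x`. -/
def congrLaw : Fm :=
  .all (.all (.all (.imp (.eqv (.bvar 2) (.bvar 1))
    (.eqv (.bvar 2 ⬝ .bvar 0) (.bvar 1 ⬝ .bvar 0)))))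

/-- The universal formula saying that being a number transfers from right to left along equality. -/
def transferLaw : Fm :=
  .all (.all (.imp (.eqv (.bvar 1) (.bvar 0)) (.imp (.num (.bvar 0)) (.num (.bvar 1)))))

/-- The universal theory in which the numbers contain `0` and are closed under successor. -/
def theory : List Fm :=
  [.num .zero, hered 1 .succ, doubleLaw, congrLaw, transferLaw]

/-- `tower j T` is the term `T double … double succ zero` with `j` occurrences of `double` after
`T`. -/
def tower : ℕ → Tm → Tm
  | 0, T => T ⬝ .succ ⬝ .zero
  | j + 1, T => tower j (T ⬝ .double)

/-- The tautological universal formula `∀ x̄ (A^M → A^M)` for the cut formula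
`A = hered (n + 2) double`. -/
def tautology (n : ℕ) : Fm :=
  uclose (.imp (matrix (hered (n + 2) .double)) (matrix (hered (n + 2) .double)))

/-- The antecedent of the `n`-th sequent of the family; the succedent is
`num (tower n double)`. -/
def antecedent (n : ℕ) : List Fm :=
  tautology n :: theory

/-! ### Size and form of the sequents -/

@[simp]
theorem szT_app (s t : Tm) : szT (s ⬝ t) = szT s + szT t + 1 := by
  simp only [Tm.app, szT, szTs]
  omega

theorem szF_hered_add (k : ℕ) (t : Tm) : szF (hered k t) + 5 = 6 * 2 ^ k + szT t := by
  induction k generalizing t with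
  | zero => simp only [hered, Fm.num, szF, szTs]; omega
  | succ k ih =>
    have premise := ih (.bvar 0)
    have conclusion := ih (liftT 0 t ⬝ .bvar 0)
    simp only [szT_app, szT_liftT, szT] at premise conclusion
    simp only [hered, szF, pow_succ]
    omega

theorem szT_tower (j : ℕ) (T : Tm) : szT (tower j T) = szT T + 2 * j + 4 := by
  induction j generalizing T with
  | zero => simp only [tower, szT_app, Tm.succ, Tm.zero, szT, szTs]
  | succ j ih => simp only [tower, ih, szT_app, Tm.double, szT, szTs]; omega

theorem szF_tautology_le (n : ℕ) : szF (tautology n) ≤ 96 * 2 ^ n := by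
  have matrix_le := szF_matrix_le (hered (n + 2) .double)
  have hered_size := szF_hered_add (n + 2) .double
  have closure_le := szF_uclose_le
    (.imp (matrix (hered (n + 2) .double)) (matrix (hered (n + 2) .double)))
  simp only [szF, Tm.double, szT, szTs, pow_add] at *
  rw [tautology, Tm.double]
  omega

theorem seqSize_antecedent_le (n : ℕ) :
    seqSize (antecedent n) [.num (tower n .double)] ≤ 200 * 2 ^ n := by
  have := szF_tautology_le n
  have := Nat.lt_two_pow_self (n := n)
  have size_eq : seqSize (antecedent n) [.num (tower n .double)] =
      szF (tautology n) + 2 * n + 54 := by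
    simp only [seqSize, antecedent, theory, doubleLaw, congrLaw, transferLaw, hered, Fm.num,
      Fm.eqv, szT_app, szT_liftT, Tm.double, Tm.succ, Tm.zero, szF, szT, szTs, szT_tower,
      List.cons_append, List.nil_append, List.foldr_cons, List.foldr_nil]
    omega
  omega

@[simp]
theorem noEpsT_app (s t : Tm) : noEpsT (s ⬝ t) = (noEpsT s && noEpsT t) := by
  simp only [Tm.app, noEpsT, noEpsTs, Bool.and_true]

@[simp]
theorem noEpsF_hered (k : ℕ) (t : Tm) : noEpsF (hered k t) = noEpsT t := by
  induction k generalizing t with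
  | zero => simp [hered, Fm.num, noEpsF, noEpsTs]
  | succ k ih => simp [hered, noEpsF, ih, noEpsT]

@[simp]
theorem noEpsT_tower (j : ℕ) (T : Tm) : noEpsT (tower j T) = noEpsT T := by
  induction j generalizing T with
  | zero => simp [tower, Tm.succ, Tm.zero, noEpsT, noEpsTs]
  | succ j ih => simp [tower, ih, Tm.double, noEpsT, noEpsTs]

theorem foSeq_antecedent (n : ℕ) : FOSeq (antecedent n) [.num (tower n .double)] := by
  simp [FOSeq, isFO, antecedent, tautology, theory, doubleLaw, congrLaw, transferLaw, Fm.num,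
    Fm.eqv, Tm.double, Tm.succ, Tm.zero, noEpsF, noEpsT, noEpsTs]

theorem negW_tautology (n : ℕ) : negW (tautology n) := by
  simp [tautology, negW, posW_of_qfree, negW_of_qfree, qfree_matrix]

theorem weakSeq_antecedent (n : ℕ) (t : Tm) : WeakSeq (antecedent n) [.num t] := by
  simp [WeakSeq, antecedent, theory, negW_tautology, doubleLaw, congrLaw, transferLaw, hered,
    Fm.num, Fm.eqv, negW, posW]

/-! ### Short proofs with cuts -/

/-- `ProvableIn C n Γ Δ`: the sequent `Γ ⊢ Δ` has an `LK`-derivation of size at most `n` all of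
whose cut formulas satisfy `C`. -/
def ProvableIn (C : Fm → Prop) (n : ℕ) (Γ Δ : List Fm) : Prop :=
  ∃ d : Deriv Γ Δ, d.Std ∧ d.size ≤ n ∧ ∀ A ∈ d.cutFms, C A

namespace ProvableIn

variable {C : Fm → Prop} {m n : ℕ} {A B : Fm} {Γ Γ₁ Γ₂ Δ : List Fm}

theorem mono (h : ProvableIn C m Γ Δ) (hmn : m ≤ n) : ProvableIn C n Γ Δ :=
  let ⟨d, hstd, hsize, hcut⟩ := h
  ⟨d, hstd, hsize.trans hmn, hcut⟩

theorem ax (A : Fm) : ProvableIn C 1 [A] [A] :=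
  ⟨.ax A, trivial, le_rfl, by simp [Deriv.cutFms]⟩

theorem perm (h : ProvableIn C n Γ₁ Δ) (hΓ : Γ₁.Perm Γ₂) : ProvableIn C (n + 1) Γ₂ Δ :=
  let ⟨d, hstd, hsize, hcut⟩ := h
  ⟨.permL _ _ _ hΓ d, hstd, Nat.succ_le_succ hsize, hcut⟩

theorem wL (A : Fm) (h : ProvableIn C n Γ Δ) : ProvableIn C (n + 1) (A :: Γ) Δ :=
  let ⟨d, hstd, hsize, hcut⟩ := h
  ⟨.wL A _ _ d, hstd, Nat.succ_le_succ hsize, hcut⟩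

theorem cL (h : ProvableIn C n (A :: A :: Γ) Δ) : ProvableIn C (n + 1) (A :: Γ) Δ :=
  let ⟨d, hstd, hsize, hcut⟩ := h
  ⟨.cL A _ _ d, hstd, Nat.succ_le_succ hsize, hcut⟩

theorem impL (h₁ : ProvableIn C m Γ₁ [A]) (h₂ : ProvableIn C n (B :: Γ₂) Δ) :
    ProvableIn C (m + n + 1) (.imp A B :: (Γ₁ ++ Γ₂)) Δ :=
  let ⟨d, hstd, hsize, hcut⟩ := h₁
  let ⟨d', hstd', hsize', hcut'⟩ := h₂
  ⟨.impL A B Γ₁ [] Γ₂ Δ d d', ⟨hstd, hstd'⟩, Nat.succ_le_succ (Nat.add_le_add hsize hsize'),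
    List.forall_mem_append.2 ⟨hcut, hcut'⟩⟩

theorem impR (h : ProvableIn C n (A :: Γ) [B]) : ProvableIn C (n + 1) Γ [.imp A B] :=
  let ⟨d, hstd, hsize, hcut⟩ := h
  ⟨.impR A B Γ [] d, hstd, Nat.succ_le_succ hsize, hcut⟩

theorem allL (t : Tm) (h : ProvableIn C n (inst0 A t :: Γ) Δ) :
    ProvableIn C (n + 1) (.all A :: Γ) Δ :=
  let ⟨d, hstd, hsize, hcut⟩ := h
  ⟨.allL t A Γ Δ d, hstd, Nat.succ_le_succ hsize, hcut⟩

theorem allR (h : ∀ a, ProvableIn C n Γ [inst0 A (.fvar a)]) :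
    ProvableIn C (n + 1) Γ [.all A] :=
  let ⟨a, ha⟩ := Infinite.exists_notMem_finset (fvSeq Γ [.all A]).toFinset
  let ⟨d, hstd, hsize, hcut⟩ := h a
  ⟨.allR a A Γ [] d, ⟨by simpa using ha, hstd⟩, Nat.succ_le_succ hsize, hcut⟩

theorem cut (hA : C A) (h₁ : ProvableIn C m Γ₁ [A]) (h₂ : ProvableIn C n (A :: Γ₂) Δ) :
    ProvableIn C (m + n + 1) (Γ₁ ++ Γ₂) Δ :=
  let ⟨d, hstd, hsize, hcut⟩ := h₁
  let ⟨d', hstd', hsize', hcut'⟩ := h₂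
  ⟨.cut A Γ₁ [] Γ₂ Δ d d', ⟨hstd, hstd'⟩, Nat.succ_le_succ (Nat.add_le_add hsize hsize'),
    List.forall_mem_cons.2 ⟨hA, List.forall_mem_append.2 ⟨hcut, hcut'⟩⟩⟩

theorem weaken (h : ProvableIn C n Γ₂ Δ) : ∀ Γ₁, ProvableIn C (n + Γ₁.length) (Γ₁ ++ Γ₂) Δ
  | [] => h
  | A :: Γ₁ => (weaken h Γ₁).wL A

theorem contract (hΓ : Γ₁ ⊆ Γ) (h : ProvableIn C n (Γ₁ ++ Γ) Δ) :
    ProvableIn C (n + 3 * Γ₁.length) Γ Δ := by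
  induction Γ₁ generalizing n with
  | nil => exact h
  | cons A Γ₁ ih =>
    classical
    obtain ⟨hA, hΓ₁⟩ := List.cons_subset.1 hΓ
    have hperm := List.perm_cons_erase (List.mem_append_right Γ₁ hA)
    have contracted := ((h.perm (hperm.cons A)).cL).perm hperm.symm
    exact (ih hΓ₁ contracted).mono (by simp only [List.length_cons]; omega)

theorem ax_of_mem (hA : A ∈ Γ) : ProvableIn C (Γ.length + 1) Γ [A] := by
  classical
  have hperm : (Γ.erase A ++ [A]).Perm Γ :=
    (List.perm_append_singleton _ _).trans (List.perm_cons_erase hA).symm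
  refine (((ax A).weaken (Γ.erase A)).perm hperm).mono (le_of_eq ?_)
  rw [← hperm.length_eq, List.length_append, List.length_singleton, Nat.add_comm 1]

theorem heredL (k : ℕ) (t u : Tm) (ht : hered (k + 1) t ∈ Γ) (hΓ : Γ₁ ⊆ Γ)
    (hu : ProvableIn C m Γ₁ [hered k u]) (h : ProvableIn C n (hered k (t ⬝ u) :: Γ) Δ) :
    ProvableIn C (m + n + 5 + 3 * Γ₁.length) Γ Δ := by
  have left := hu.impL h
  rw [← inst0_hered_imp] at left
  exact ((left.allL u).contract (Γ₁ := _ :: Γ₁) (List.cons_subset.2 ⟨ht, hΓ⟩)).mono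
    (by simp only [List.length_cons]; omega)

theorem heredL_of_mem (k : ℕ) (t u : Tm) (ht : hered (k + 1) t ∈ Γ)
    (hu : hered k u ∈ Γ) (h : ProvableIn C n (hered k (t ⬝ u) :: Γ) Δ) :
    ProvableIn C (n + 9) Γ Δ :=
  (heredL k t u ht (by simpa using hu) (ax (hered k u)) h).mono
    (by simp only [List.length_singleton]; omega)

theorem heredR {k : ℕ} {t : Tm}
    (h : ∀ a, ProvableIn C n (hered k (.fvar a) :: Γ) [hered k (t ⬝ .fvar a)]) :
    ProvableIn C (n + 2) Γ [hered (k + 1) t] :=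
  allR fun a => by simpa only [inst0_hered_imp] using (h a).impR

theorem doubleL (s t : Tm) (hlaw : doubleLaw ∈ Γ)
    (h : ProvableIn C n (.eqv (.double ⬝ s ⬝ t) (s ⬝ (s ⬝ t)) :: Γ) Δ) :
    ProvableIn C (n + 5) Γ Δ := by
  refine contract (Γ₁ := [doubleLaw]) (by simpa using hlaw) (.allL s (.allL t ?_))
  simpa [inst0, subF, subT, Tm.double, subTs] using h

theorem congrL {s t : Tm} (u : Tm) (hlaw : congrLaw ∈ Γ) (heqv : .eqv s t ∈ Γ)
    (h : ProvableIn C n (.eqv (s ⬝ u) (t ⬝ u) :: Γ) Δ) : ProvableIn C (n + 11) Γ Δ := by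
  refine (contract (n := n + 5) (Γ₁ := [congrLaw, .eqv s t]) (by simp [hlaw, heqv])
    (.allL s (.allL t (.allL u ?_)))).mono le_rfl
  simpa [inst0, subF, subT, subT_liftT, Nat.add_comm 1] using (ax (.eqv s t)).impL h

theorem transferL {s t : Tm} (hlaw : transferLaw ∈ Γ) (heqv : .eqv s t ∈ Γ) (hnum : .num t ∈ Γ)
    (h : ProvableIn C n (.num s :: Γ) Δ) : ProvableIn C (n + 15) Γ Δ := by
  refine (contract (n := n + 6) (Γ₁ := [transferLaw, .eqv s t, .num t])
    (by simp [hlaw, heqv, hnum]) (.allL s (.allL t ?_))).mono le_rfl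
  refine mono (m := 1 + (1 + n + 1) + 1) ?_ (by omega)
  simpa [inst0, subF, subT] using (ax (.eqv s t)).impL ((ax (.num t)).impL h)

end ProvableIn

open ProvableIn

section

variable {C : Fm → Prop} {Γ : List Fm}

theorem provableIn_hered_of_eqv (hΓ : theory ⊆ Γ) {k : ℕ} {s t : Tm} (heqv : .eqv s t ∈ Γ)
    (ht : hered k t ∈ Γ) : ProvableIn C (Γ.length + 25 * (k + 1)) Γ [hered k s] := by
  induction k generalizing Γ s t with
  | zero =>
    refine ProvableIn.mono (transferL (hΓ (by simp [theory])) heqv ht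
      (ax_of_mem List.mem_cons_self)) ?_
    simp only [List.length_cons]
    omega
  | succ k ih =>
    refine heredR (n := Γ.length + 25 * (k + 1) + 23) fun a => ProvableIn.mono (
      congrL (.fvar a) (List.mem_cons_of_mem _ (hΓ (by simp [theory])))
        (List.mem_cons_of_mem _ heqv) <|
      heredL_of_mem k t (.fvar a) (by simp [ht]) (by simp) <|
      ih (t := t ⬝ .fvar a) (fun A hA => by simp [hΓ hA]) (by simp) (by simp)) ?_
    simp only [List.length_cons]
    omega

theorem provableIn_hered_double (hΓ : theory ⊆ Γ) (k : ℕ) :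
    ProvableIn C (Γ.length + 25 * (k + 3)) Γ [hered (k + 2) .double] := by
  have double_law (Γ' : List Fm) : doubleLaw ∈ Γ' ++ Γ :=
    List.mem_append_right _ (hΓ (by simp [theory]))
  refine heredR (n := Γ.length + 25 * (k + 1) + 48) fun f =>
    heredR (n := Γ.length + 25 * (k + 1) + 46) fun x => ProvableIn.mono (
    doubleL (.fvar f) (.fvar x) (double_law [_, _]) <|
    heredL_of_mem k (.fvar f) (.fvar x) (by simp) (by simp) <|
    heredL_of_mem k (.fvar f) (.fvar f ⬝ .fvar x) (by simp) (by simp) <|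
    provableIn_hered_of_eqv (t := .fvar f ⬝ (.fvar f ⬝ .fvar x)) (fun A hA => by simp [hΓ hA])
      (by simp) (by simp)) ?_
  simp only [List.length_cons]
  omega

theorem provableIn_num_tower (hΓ : theory ⊆ Γ) {j : ℕ} {T : Tm} (hT : hered (j + 2) T ∈ Γ) :
    ProvableIn C (Γ.length + 25 * (j + 2) ^ 2) Γ [.num (tower j T)] := by
  induction j generalizing Γ T with
  | zero =>
    refine ProvableIn.mono (heredL_of_mem 1 T .succ hT (hΓ (by simp [theory])) <|
      heredL_of_mem 0 (T ⬝ .succ) .zero (by simp)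
        (List.mem_cons_of_mem _ (hΓ (by simp [theory, hered]))) <|
      ax_of_mem List.mem_cons_self) ?_
    simp only [List.length_cons]
    omega
  | succ j ih =>
    refine ProvableIn.mono (heredL (j + 2) T .double hT hΓ
      (provableIn_hered_double (List.Subset.refl theory) j) <|
      ih (T := T ⬝ .double) (fun A hA => by simp [hΓ hA]) (by simp)) ?_
    simp only [List.length_cons, theory, List.length_nil]
    ring_nf
    omega

end

theorem provableIn_num_tower_double (n : ℕ) :
    ProvableIn (· = hered (n + 2) .double) (60 * (n + 2) ^ 2) (antecedent n)
      [.num (tower n .double)] := by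
  have cut_formula : ProvableIn (· = hered (n + 2) .double) _ theory [hered (n + 2) .double] :=
    provableIn_hered_double (List.Subset.refl theory) n
  have conclusion : ProvableIn (· = hered (n + 2) .double) _ (hered (n + 2) .double :: theory)
      [.num (tower n .double)] :=
    provableIn_num_tower (List.subset_cons_self _ theory) List.mem_cons_self
  refine (((ProvableIn.cut (C := (· = _)) rfl cut_formula conclusion).contract
    (List.Subset.refl theory)).wL (tautology n)).mono ?_
  simp only [List.length_cons, theory, List.length_nil]
  ring_nf
  omega

/-! ### Iterated exponentials -/

theorem iterExp_two_pow (k n : ℕ) : iterExp k (2 ^ n) = iterExp (k + 1) n := by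
  induction k with
  | zero => rfl
  | succ k ih => exact congrArg (2 ^ ·) ih

theorem iterExp_add (k m n : ℕ) : iterExp (k + m) n = iterExp k (iterExp m n) := by
  induction k with
  | zero => rw [Nat.zero_add, iterExp]
  | succ k ih => rw [Nat.succ_add, iterExp, iterExp, ih]

theorem iterExp_strictMono (k : ℕ) : StrictMono (iterExp k) := by
  induction k with
  | zero => exact strictMono_id
  | succ k ih => exact (pow_right_strictMono₀ one_lt_two).comp ih

theorem two_mul_add_two_le_iterExp (m : ℕ) : 2 * m + 2 ≤ iterExp m 2 := by
  induction m with
  | zero => rfl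
  | succ m ih =>
    calc 2 * (m + 1) + 2 ≤ 2 * (2 * m + 2) := by omega
      _ ≤ 2 ^ (2 * m + 2) := Nat.mul_le_pow (by decide) _
      _ ≤ iterExp (m + 1) 2 := Nat.pow_le_pow_right (by decide) ih

theorem exists_iterExp_lt_iterExp_log (k : ℕ) : ∃ i, iterExp k i < iterExp (Nat.log 2 i) 2 := by
  refine ⟨2 ^ (k + 1 + (k + 2)), ?_⟩
  rw [iterExp_two_pow, Nat.log_pow Nat.one_lt_two, iterExp_add (k + 1) (k + 2)]
  have := two_mul_add_two_le_iterExp (k + 2)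
  exact iterExp_strictMono (k + 1) (by omega)

theorem two_pow_log_le_succ (i : ℕ) : 2 ^ Nat.log 2 i ≤ i + 1 :=
  (Nat.pow_le_pow_right two_pos (Nat.log_mono_right i.le_succ)).trans
    (Nat.pow_log_le_self 2 i.succ_ne_zero)

/-! ### Herbrand analysis of cut-free proofs -/

/-- The number of connectives and quantifiers of a formula, a measure of complexity that is
invariant under substitution. -/
def numConnectives : Fm → ℕ
  | .atom _ _ => 0
  | .and A B | .or A B | .imp A B => numConnectives A + numConnectives B + 1
  | .not A | .all A | .ex A => numConnectives A + 1

@[simp]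
theorem numConnectives_subF : ∀ (A : Fm) (k : ℕ) (u : Tm),
    numConnectives (subF k u A) = numConnectives A
  | .atom _ _, _, _ => rfl
  | .and A B, _, _ | .or A B, _, _ | .imp A B, _, _ => by
    simp only [subF, numConnectives, numConnectives_subF A, numConnectives_subF B]
  | .not A, _, _ | .all A, _, _ | .ex A, _, _ => by
    simp only [subF, numConnectives, numConnectives_subF A]

/-- Truth of a formula under the valuation `v` of its atoms, when the quantifiers range over the
terms in `T` only. -/
def HoldsOn (v : ℕ → Tms → Prop) (T : Set Tm) : Fm → Prop
  | .atom p ts => v p ts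
  | .and A B => HoldsOn v T A ∧ HoldsOn v T B
  | .or A B => HoldsOn v T A ∨ HoldsOn v T B
  | .imp A B => HoldsOn v T A → HoldsOn v T B
  | .not A => ¬ HoldsOn v T A
  | .all A => ∀ t ∈ T, HoldsOn v T (inst0 A t)
  | .ex A => ∃ t ∈ T, HoldsOn v T (inst0 A t)
termination_by A => numConnectives A
decreasing_by all_goals simp only [inst0, numConnectives_subF, numConnectives]; omega

namespace Deriv

/-- The instantiating terms of the weak quantifier inferences of a derivation. -/
def weakTerms : ∀ {Γ Δ}, Deriv Γ Δ → List Tm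
  | _, _, ax _ => []
  | _, _, allL t _ _ _ d | _, _, exR t _ _ _ d => t :: d.weakTerms
  | _, _, andR _ _ _ _ _ _ d e | _, _, orL _ _ _ _ _ _ d e | _, _, impL _ _ _ _ _ _ d e
  | _, _, cut _ _ _ _ _ d e => d.weakTerms ++ e.weakTerms
  | _, _, andL _ _ _ _ d | _, _, orR _ _ _ _ d | _, _, impR _ _ _ _ d
  | _, _, notL _ _ _ d | _, _, notR _ _ _ d | _, _, wL _ _ _ d | _, _, wR _ _ _ d
  | _, _, cL _ _ _ d | _, _, cR _ _ _ d | _, _, allR _ _ _ _ d | _, _, exL _ _ _ _ d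
  | _, _, permL _ _ _ _ d | _, _, permR _ _ _ _ d => d.weakTerms

variable {Γ Δ : List Fm}

theorem length_weakTerms_le_size (d : Deriv Γ Δ) : d.weakTerms.length ≤ d.size := by
  induction d <;> simp only [weakTerms, size, List.length_nil, List.length_cons,
    List.length_append] <;> omega

theorem strongs_eq_nil (d : Deriv Γ Δ) (hcut : d.cutFms = []) (hweak : WeakSeq Γ Δ) :
    d.strongs = [] := by
  induction d with
  | ax => rfl
  | cut => simp [cutFms] at hcut
  | allR => simp [WeakSeq, posW] at hweak
  | exL => simp [WeakSeq, negW] at hweak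
  | permL _ _ _ hΓ _ ih => exact ih hcut ⟨fun A hA => hweak.1 A (hΓ.mem_iff.1 hA), hweak.2⟩
  | permR _ _ _ hΔ _ ih => exact ih hcut ⟨hweak.1, fun A hA => hweak.2 A (hΔ.mem_iff.1 hA)⟩
  | _ =>
    simp_all [strongs, cutFms, WeakSeq, posW, negW, inst0, or_imp, forall_and]

theorem exists_holdsOn {v : ℕ → Tms → Prop} {T : Set Tm} (d : Deriv Γ Δ)
    (hstrong : d.strongs = []) (hT : ∀ t ∈ d.weakTerms, t ∈ T) (hΓ : ∀ A ∈ Γ, HoldsOn v T A) :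
    ∃ A ∈ Δ, HoldsOn v T A := by
  induction d with
  | allR => simp [strongs] at hstrong
  | exL => simp [strongs] at hstrong
  | permL _ _ _ h _ ih => exact ih hstrong hT fun A hA => hΓ A (h.mem_iff.1 hA)
  | permR _ _ _ h _ ih =>
    obtain ⟨A, hA, hAT⟩ := ih hstrong hT hΓ
    exact ⟨A, h.mem_iff.1 hA, hAT⟩
  | allL t A Γ Δ d ih =>
    obtain ⟨ht, hT⟩ := List.forall_mem_cons.1 hT
    obtain ⟨hA, hΓ⟩ := List.forall_mem_cons.1 hΓ
    rw [HoldsOn] at hA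
    exact ih hstrong hT (List.forall_mem_cons.2 ⟨hA t ht, hΓ⟩)
  | exR t A Γ Δ d ih =>
    obtain ⟨ht, hT⟩ := List.forall_mem_cons.1 hT
    rw [List.exists_mem_cons_iff, HoldsOn]
    exact ((List.exists_mem_cons_iff _ _ _).1 (ih hstrong hT hΓ)).imp_left fun hA => ⟨t, ht, hA⟩
  | _ =>
    simp only [strongs, weakTerms, List.append_eq_nil_iff, List.mem_append, List.mem_cons, or_imp,
      forall_and, forall_eq, or_and_right, exists_or, exists_eq_left,
      List.not_mem_nil, false_and, false_imp_iff, exists_false, HoldsOn] at *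
    grind

end Deriv

/-! ### The full type hierarchy over the natural numbers -/

theorem iterate_comp_self {α : Type*} (f : α → α) (c : ℕ) :
    (fun g : α → α => g ∘ g)^[c] f = f^[2 ^ c] := by
  induction c with
  | zero => rfl
  | succ c ih =>
    rw [Function.iterate_succ_apply', ih, pow_succ, Nat.mul_two, Function.iterate_add]

/-- The full hierarchy of pure types over `ℕ`, in which the combinators denote set-theoretic
functions. -/
def PureType : ℕ → Type
  | 0 => ℕ
  | k + 1 => PureType k → PureType k

instance : ∀ k, Inhabited (PureType k)
  | 0 => ⟨(0 : ℕ)⟩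
  | _ + 1 => ⟨fun x => x⟩

/-- The domain in which the untyped terms are interpreted: a functional has one component at each
pure type, so that it may be applied to any other one. -/
def Functional : Type :=
  ∀ k, PureType k

namespace Functional

instance : Inhabited Functional :=
  ⟨fun _ => default⟩

/-- Application of functionals, component by component. -/
def app (f x : Functional) : Functional :=
  fun k => (f (k + 1) : PureType k → PureType k) (x k)

/-- The functional `f ↦ f ∘ f`, interpreting `Tm.double`. -/
def double : Functional
  | 0 | 1 => default
  | _ + 2 => fun f x => f (f x)

/-- The successor function, interpreting `Tm.succ`. -/
def succ : Functional
  | 1 => Nat.succ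
  | _ => default

/-- The number denoted by a functional, its component at the ground type. -/
def toNat (x : Functional) : ℕ :=
  x 0

/-- `T.IsIterator c` says that `T` denotes the `c`-th Church numeral: `T f` is the `c`-fold iterate
of `f`, at all types. -/
def IsIterator (T : Functional) (c : ℕ) : Prop :=
  ∀ k (f : PureType (k + 1)), (T (k + 2) : PureType (k + 1) → PureType (k + 1)) f =
    Nat.iterate (f : PureType k → PureType k) c

theorem isIterator_double : double.IsIterator 2 :=
  fun _ _ => rfl

theorem IsIterator.app_double {T : Functional} {c : ℕ} (hT : T.IsIterator c) :
    (T.app double).IsIterator (2 ^ c) :=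
  fun k f => (congrFun (hT (k + 1) (double (k + 2))) f).trans
    (iterate_comp_self (α := PureType k) f c)

theorem IsIterator.toNat_app_succ {T : Functional} {c : ℕ} (hT : T.IsIterator c)
    (x : Functional) : ((T.app succ).app x).toNat = x.toNat + c :=
  (congrFun (hT 0 Nat.succ) (x 0)).trans (Nat.succ_iterate x.toNat c)

end Functional

/-- The interpretation of the function symbols as functionals. -/
def interp : ℕ → List Functional → Functional
  | 0, [f, x] => f.app x
  | 1, [] => .double
  | 2, [] => .succ
  | _, _ => default

mutual

/-- The value of a term, all variables being interpreted by the default functional. -/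
def valT : Tm → Functional
  | .func f ts => interp f (valTs ts)
  | .bvar _ | .fvar _ | .eps _ => default

/-- The values of a list of terms. -/
def valTs : Tms → List Functional
  | .nil => []
  | .cons t ts => valT t :: valTs ts

end

theorem toNat_valT_tower {T : Tm} {c : ℕ} (hT : (valT T).IsIterator c) (j : ℕ) :
    (valT (tower j T)).toNat = iterExp j c := by
  induction j generalizing T c with
  | zero => exact (hT.toNat_app_succ _).trans (Nat.zero_add c)
  | succ j ih => exact (ih (T := T ⬝ .double) hT.app_double).trans (iterExp_two_pow j c)

/-! ### The lower bound for cut-free proofs -/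

/-- The universal formulas whose quantifier-free part is an implication from a formula to itself,
such as the universal closures of these implications. -/
inductive IsUniversalIdentity : Fm → Prop
  | imp (A : Fm) : IsUniversalIdentity (.imp A A)
  | all {A : Fm} : IsUniversalIdentity A → IsUniversalIdentity (.all A)

namespace IsUniversalIdentity

variable {A : Fm}

protected theorem subF (hA : IsUniversalIdentity A) (k : ℕ) (u : Tm) :
    IsUniversalIdentity (subF k u A) := by
  induction hA generalizing k u with
  | imp A => exact .imp _
  | all _ ih => exact .all (ih _ _)

protected theorem abF (hA : IsUniversalIdentity A) (a k : ℕ) : IsUniversalIdentity (abF a k A) := by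
  induction hA generalizing k with
  | imp A => exact .imp _
  | all _ ih => exact .all (ih _)

protected theorem uclose (hA : IsUniversalIdentity A) : IsUniversalIdentity (uclose A) := by
  unfold EpsCalc.uclose
  induction (fvF A).dedup with
  | nil => exact hA
  | cons a l ih => exact .all (ih.abF a 0)

theorem holdsOn (v : ℕ → Tms → Prop) (T : Set Tm) :
    ∀ {A : Fm}, IsUniversalIdentity A → HoldsOn v T A
  | _, .imp A => by rw [HoldsOn]; exact id
  | _, .all (A := A) hA => by
    rw [HoldsOn]
    exact fun t _ => holdsOn v T (hA.subF 0 t)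
termination_by A => numConnectives A
decreasing_by simp only [inst0, numConnectives_subF, numConnectives]; omega

end IsUniversalIdentity

/-- The valuation that interprets equality by equality of functionals, and the numbers by the
initial segment `{0, …, m}`. -/
def segmentVal (m : ℕ) : ℕ → Tms → Prop
  | 0, .cons t .nil => (valT t).toNat ≤ m
  | 1, .cons s (.cons t .nil) => valT s = valT t
  | _, _ => True

theorem holdsOn_segmentVal_num {m : ℕ} {T : Set Tm} {t : Tm} :
    HoldsOn (segmentVal m) T (.num t) ↔ (valT t).toNat ≤ m := by
  rw [Fm.num, HoldsOn, segmentVal]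

theorem holdsOn_segmentVal_eqv {m : ℕ} {T : Set Tm} {s t : Tm} :
    HoldsOn (segmentVal m) T (.eqv s t) ↔ valT s = valT t := by
  rw [Fm.eqv, HoldsOn, segmentVal]

theorem holdsOn_segmentVal_of_mem_theory {m : ℕ} {T : Set Tm}
    (hm : ∀ t ∈ T, (valT t).toNat ≠ m) {A : Fm} (hA : A ∈ theory) :
    HoldsOn (segmentVal m) T A := by
  simp only [theory, List.mem_cons, List.not_mem_nil, or_false] at hA
  obtain rfl | rfl | rfl | rfl | rfl := hA
  · exact holdsOn_segmentVal_num.2 (Nat.zero_le m)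
  · -- The segment is closed under successor except at its last element `m`, which `T` misses.
    rw [hered, HoldsOn]
    intro t ht
    rw [inst0_hered_imp, HoldsOn]
    intro h
    exact holdsOn_segmentVal_num.2
      (lt_of_le_of_ne (holdsOn_segmentVal_num.1 h) (hm t ht))
  · simp only [doubleLaw, HoldsOn, inst0, subF, subF_eqv]
    intro f _ x _
    exact holdsOn_segmentVal_eqv.2 rfl
  · simp only [congrLaw, HoldsOn, inst0, subF, subF_eqv, holdsOn_segmentVal_eqv]
    intro f _ g _ x _ h
    exact congrArg (Functional.app · _) h
  · simp only [transferLaw, HoldsOn, inst0, subF, subF_eqv, subF_num, holdsOn_segmentVal_eqv,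
      holdsOn_segmentVal_num]
    intro s _ t _ h
    exact (congrArg Functional.toNat h).trans_le

theorem exists_weakTerm_toNat_eq {n m : ℕ} (d : Deriv (antecedent n) [.num (tower n .double)])
    (hcut : d.cutFms = []) (hm : m < iterExp n 2) : ∃ t ∈ d.weakTerms, (valT t).toNat = m := by
  by_contra! hmiss
  have antecedent_holds (A) (hA : A ∈ antecedent n) :
      HoldsOn (segmentVal m) {t | t ∈ d.weakTerms} A :=
    (List.mem_cons.1 hA).elim (fun h => h ▸ (IsUniversalIdentity.imp _).uclose.holdsOn _ _)
      (holdsOn_segmentVal_of_mem_theory hmiss)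
  obtain ⟨A, hA, hAT⟩ := d.exists_holdsOn (d.strongs_eq_nil hcut (weakSeq_antecedent n _))
    (fun _ => id) antecedent_holds
  obtain rfl := List.mem_singleton.1 hA
  have tower_le := holdsOn_segmentVal_num.1 hAT
  rw [toNat_valT_tower (T := .double) Functional.isIterator_double] at tower_le
  exact hm.not_ge tower_le

theorem iterExp_two_le_size {n : ℕ} (d : Deriv (antecedent n) [.num (tower n .double)])
    (hcut : d.cutFms = []) : iterExp n 2 ≤ d.size := by
  have values : List.range (iterExp n 2) ⊆ d.weakTerms.map fun t => (valT t).toNat :=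
    fun m hm => List.mem_map.2 (exists_weakTerm_toNat_eq d hcut (List.mem_range.1 hm))
  calc iterExp n 2 = (List.range (iterExp n 2)).length := List.length_range.symm
    _ ≤ (d.weakTerms.map fun t => (valT t).toNat).length :=
      (List.nodup_range.subperm values).length_le
    _ = d.weakTerms.length := List.length_map _
    _ ≤ d.size := d.length_weakTerms_le_size

/-- There is a family of first-order sequents `S i` such that:
(1) the size of `S i` is polynomial in `i`; (2) no elementary function of `i`
bounds the size of the smallest cut-free LK-proofs of `S i`; (3) `S i` has
LK-proofs with cuts of polynomial size; (4) `S i` contains weak quantifiers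
only; (5) for every cut formula `A` of the polynomial-size proof, the formula
`∀x̄ (A^M → A^M)` occurs in the antecedent of `S i`. -/
theorem worst_case_with_tautological_universal_formulas :
    ∃ S : ℕ → List Fm × List Fm,
      (∀ i, FOSeq (S i).1 (S i).2) ∧
      -- (1)
      (∃ p : Polynomial ℕ, ∀ i, seqSize (S i).1 (S i).2 ≤ p.eval i) ∧
      -- (2)
      (∀ f : ℕ → ℕ, IsElementary f →
        ¬ ∀ i, ∃ d : Deriv (S i).1 (S i).2,
            d.Std ∧ d.cutFms = [] ∧ d.size ≤ f i) ∧
      -- (3) together with (5)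
      (∃ q : Polynomial ℕ, ∀ i, ∃ d : Deriv (S i).1 (S i).2,
          d.Std ∧ d.size ≤ q.eval i ∧
          ∀ A ∈ d.cutFms,
            uclose (Fm.imp (matrix A) (matrix A)) ∈ (S i).1) ∧
      -- (4)
      (∀ i, WeakSeq (S i).1 (S i).2) := by
  refine ⟨fun i => (antecedent (Nat.log 2 i), [.num (tower (Nat.log 2 i) .double)]),
    fun i => foSeq_antecedent _, ⟨200 * (.X + 1), fun i => ?_⟩, ?_,
    ⟨60 * (.X + 2) ^ 2, fun i => ?_⟩, fun i => weakSeq_antecedent _ _⟩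
  · simpa using (seqSize_antecedent_le _).trans (Nat.mul_le_mul_left 200 (two_pow_log_le_succ i))
  · rintro f ⟨k, f_le⟩ short
    obtain ⟨i, hi⟩ := exists_iterExp_lt_iterExp_log k
    obtain ⟨d, -, hcut, hsize⟩ := short i
    exact (((iterExp_two_le_size d hcut).trans hsize).trans (f_le i)).not_gt hi
  · obtain ⟨d, hstd, hsize, hcut⟩ := provableIn_num_tower_double (Nat.log 2 i)
    refine ⟨d, hstd, hsize.trans ?_, fun A hA => hcut A hA ▸ List.mem_cons_self⟩
    simpa using Nat.pow_le_pow_left (Nat.add_le_add_right (Nat.log_le_self 2 i) 2) 2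

end EpsCalc
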